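/- Fix an integer t ≥ 2 and positive integers r_1, ..., r_t. If n ≥ R(r_1K_2, ..., r_tK_2), then R̃(r_1K_2, ..., r_tK_2; n) ≤ ((2t − 1 + (t − 3)·log₂(t − 2)) / (t + 1)) · n, with the convention that log₂ 0 = 0; that is, Builder has a strategy that, playing on K_n with t colors, guarantees within ⌊((2t − 1 + (t − 3)·log₂(t − 2))/(t + 1)) · n⌋ moves that some color i has r_i pairwise disjoint edges of color i, against every Painter strategy. -/

import Mathlib

open Finset

/-- Two edges of a complete graph (elements of `Sym2 (Fin n)`) are disjoint if they
share no vertex. -/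
def EdgeDisjoint {n : ℕ} (e f : Sym2 (Fin n)) : Prop := ∀ v, v ∈ e → v ∉ f

/-- A finite set of elements of `Sym2 (Fin n)` is a matching if each element is a genuine
(non-loop) edge and the edges are pairwise disjoint. -/
def IsMatchingIn {n : ℕ} (M : Finset (Sym2 (Fin n))) : Prop :=
  (∀ e ∈ M, ¬ e.IsDiag) ∧ (M : Set (Sym2 (Fin n))).Pairwise EdgeDisjoint

/-- A history of the online Ramsey game on `K_n` with `t` colours: the list of
edges played so far, each together with the colour Painter gave it. -/
abbrev GameHistory (n t : ℕ) := List (Sym2 (Fin n) × Fin t)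

/-- A Builder strategy: given the history so far, select the next edge. -/
abbrev BuilderStrategy (n t : ℕ) := GameHistory n t → Sym2 (Fin n)

/-- A Painter strategy: given the history so far and the newly selected edge,
choose a colour for it. -/
abbrev PainterStrategy (n t : ℕ) := GameHistory n t → Sym2 (Fin n) → Fin t

/-- The history after `k` moves when Builder plays strategy `B` against Painter
strategy `P`. -/
def gamePlay {n t : ℕ} (B : BuilderStrategy n t) (P : PainterStrategy n t) :
    ℕ → GameHistory n t
  | 0 => []
  | k + 1 =>
      let h := gamePlay B P k
      h ++ [(B h, P h (B h))]

/-- Builder plays legally for the first `k` moves against `P`: every selected edge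
is a genuine (non-loop) edge not selected before. -/
def BuilderValid {n t : ℕ} (B : BuilderStrategy n t) (P : PainterStrategy n t)
    (k : ℕ) : Prop :=
  ∀ j < k, ¬ (B (gamePlay B P j)).IsDiag ∧
    B (gamePlay B P j) ∉ (gamePlay B P j).map Prod.fst

/-- The history `h` contains, for some colour `i`, a matching of `r i` edges all
coloured `i`. -/
def HistoryHasMatching (n t : ℕ) (r : Fin t → ℕ) (h : GameHistory n t) : Prop :=
  ∃ i : Fin t, ∃ M : Finset (Sym2 (Fin n)),
    M.card = r i ∧ IsMatchingIn M ∧ ∀ e ∈ M, (e, i) ∈ h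

/-- Builder can force, within `k` legal moves on `K_n` with `t` colours, some colour
`i` to contain a matching of `r i` edges, against every Painter strategy. -/
def BuilderWinsIn (n t : ℕ) (r : Fin t → ℕ) (k : ℕ) : Prop :=
  ∃ B : BuilderStrategy n t, (∀ P : PainterStrategy n t, BuilderValid B P k) ∧
    ∀ P : PainterStrategy n t, HistoryHasMatching n t r (gamePlay B P k)

/-- The restricted online Ramsey number `R̃(r₁K₂,…,r_tK₂; n)`: the least `k` such
that Builder can force a win within `k` moves. -/
noncomputable def restrictedOnlineRamsey (n t : ℕ) (r : Fin t → ℕ) : ℕ :=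
  sInf {k | BuilderWinsIn n t r k}

/-- A colouring `c` of (the edges of) `K_N` with `t` colours contains, for some colour
`i`, a matching of `r i` edges all coloured `i`. -/
def ColoringHasMatching (N t : ℕ) (r : Fin t → ℕ) (c : Sym2 (Fin N) → Fin t) : Prop :=
  ∃ i : Fin t, ∃ M : Finset (Sym2 (Fin N)),
    M.card = r i ∧ IsMatchingIn M ∧ ∀ e ∈ M, c e = i

/-- The classical Ramsey number `R(r₁K₂,…,r_tK₂)`: the least `N` such that every
`t`-colouring of the edges of `K_N` contains, for some `i`, a matching of `r i`
edges in colour `i`. -/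
noncomputable def matchingRamsey (t : ℕ) (r : Fin t → ℕ) : ℕ :=
  sInf {N | ∀ c : Sym2 (Fin N) → Fin t, ColoringHasMatching N t r c}

/-!
Builder maintains a set of disjoint properly coloured trees that all use a common colour `i`. He
plays an edge `uv` between two vertices outside the trees. If its colour `d` is used on every tree,
then `uv` becomes a new tree and `d` the new common colour. Otherwise some tree `T` lacks `d`, and
Builder merges `T` with `uv` into a properly coloured tree that has gained one or two vertices and
at least one colour.

For the merge, assign to the vertices of `T` partners in `{u, v}` according to the bipartition of
`T`, and query the edge from a centroid `w` of `T` to its partner. If its colour `c` is missing at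
`w`, then `T` can be joined to `uv` (or, when `c = d`, to the partner alone). If not, the search
continues in the branch of `w` whose first edge has colour `c`; the number of edges is halved. In
the end there is an edge `wb` of colour `c` such that the edge from `w` to its partner has colour
`c`, and either `b` is a leaf, which can be dropped, or the edge from `b` to its partner has colour
`c` too, and `wb` can be replaced by the detour through `uv`. So a merge of a tree with `m + 2`
vertices costs at most `2 + log₂ m` moves, including `uv`. A tree has at most `t` colours, hence
results from fewer than `t` merges, which bounds the number of moves per vertex.

Once at most one vertex is uncovered, the trees have at least `n - 1 - k` edges, where `k` is their
number, and at least `k` edges of colour `i`. Every colour class on them is a matching, and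
`n ≥ r i + 1 + ∑ j, (r j - 1)` for `n` at least the Ramsey number, so if `k < r i` then the
pigeonhole principle applies to the edges.
-/

/-! ### Properly coloured trees -/

/-- A finite graph with coloured edges, given by its vertex set and its set of pairs
(edge, colour). Well-formedness is not part of the structure, since only the graphs satisfying
`ColoredGraph.IsProperTree` are of interest. -/
structure ColoredGraph (V C : Type*) where
  verts : Finset V
  edges : Finset (Sym2 V × C)

namespace ColoredGraph

variable {V C : Type*}

/-- Subgraph order. -/
instance : Preorder (ColoredGraph V C) := Preorder.lift fun G => (G.verts, G.edges)

/-- Colour `c` is missing at `v`: no edge of `G` at `v` has colour `c`. -/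
def Misses (G : ColoredGraph V C) (v : V) (c : C) : Prop :=
  ∀ x ∈ G.edges, v ∈ x.1 → x.2 ≠ c

/-- The one-vertex graph. -/
def single (v : V) : ColoredGraph V C := ⟨{v}, ∅⟩

@[simp] theorem card_verts_single (v : V) : #(single v : ColoredGraph V C).verts = 1 := rfl

@[simp] theorem edges_single (v : V) : (single v : ColoredGraph V C).edges = ∅ := rfl

theorem misses_single (v w : V) (c : C) : (single v).Misses w c := by simp [Misses]

theorem single_le {v : V} {G : ColoredGraph V C} (hv : v ∈ G.verts) : single v ≤ G :=
  ⟨singleton_subset_iff.2 hv, empty_subset _⟩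

/-- `G.RecordedIn h` says that every edge of `G` was played, in its colour, in the history `h`. -/
def RecordedIn (G : ColoredGraph V C) (h : List (Sym2 V × C)) : Prop := ∀ x ∈ G.edges, x ∈ h

theorem RecordedIn.mono {G : ColoredGraph V C} {h h' : List (Sym2 V × C)} (hG : G.RecordedIn h)
    (hh : h ⊆ h') : G.RecordedIn h' := fun x hx => hh (hG x hx)

/-- `G.Joinable H a b c` says that joining the disjoint graphs `G` and `H` by an edge `ab` of
colour `c` creates no colour conflict. -/
structure Joinable (G H : ColoredGraph V C) (a b : V) (c : C) : Prop where
  disjoint : Disjoint G.verts H.verts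
  left_mem : a ∈ G.verts
  right_mem : b ∈ H.verts
  left_misses : G.Misses a c
  right_misses : H.Misses b c

theorem Joinable.symm {G H : ColoredGraph V C} {a b : V} {c : C} (j : G.Joinable H a b c) :
    H.Joinable G b a c :=
  ⟨j.disjoint.symm, j.right_mem, j.left_mem, j.right_misses, j.left_misses⟩

theorem Joinable.mono_left {A G H : ColoredGraph V C} {a b : V} {c : C} (j : G.Joinable H a b c)
    (hAG : A ≤ G) (ha : a ∈ A.verts) : A.Joinable H a b c :=
  ⟨j.disjoint.mono_left hAG.1, ha, j.right_mem, fun x hx => j.left_misses x (hAG.2 hx),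
    j.right_misses⟩

variable [DecidableEq C]

/-- The set of colours used on `G`. -/
def colors (G : ColoredGraph V C) : Finset C := G.edges.image Prod.snd

@[simp] theorem mem_colors {G : ColoredGraph V C} {c : C} :
    c ∈ G.colors ↔ ∃ x ∈ G.edges, x.2 = c := mem_image

theorem colors_single (v : V) : (single v : ColoredGraph V C).colors = ∅ := rfl

theorem misses_of_notMem_colors {G : ColoredGraph V C} {c : C} (hc : c ∉ G.colors) (v : V) :
    G.Misses v c := fun x hx _ hxc => hc (mem_colors.2 ⟨x, hx, hxc⟩)

variable [DecidableEq V]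

/-- The union of `G`, `H` and an edge `ab` of colour `c`. -/
def join (G H : ColoredGraph V C) (a b : V) (c : C) : ColoredGraph V C :=
  ⟨G.verts ∪ H.verts, insert (s(a, b), c) (G.edges ∪ H.edges)⟩

section join

variable {G H A B : ColoredGraph V C} {a b p q v : V} {c i : C}

@[simp] theorem verts_join : (G.join H a b c).verts = G.verts ∪ H.verts := rfl

@[simp] theorem mem_edges_join {x : Sym2 V × C} :
    x ∈ (G.join H a b c).edges ↔ x = (s(a, b), c) ∨ x ∈ G.edges ∨ x ∈ H.edges := by
  simp [join]

theorem mem_edges_join_self : (s(a, b), c) ∈ (G.join H a b c).edges := mem_insert_self _ _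

theorem colors_join : (G.join H a b c).colors = insert c (G.colors ∪ H.colors) := by
  simp [colors, join, image_insert, image_union]

theorem misses_join :
    (G.join H a b c).Misses v i ↔ (v ∈ s(a, b) → c ≠ i) ∧ G.Misses v i ∧ H.Misses v i := by
  simp only [Misses, mem_edges_join, or_imp, forall_and, forall_eq]

theorem recordedIn_join {h : List (Sym2 V × C)} :
    (G.join H a b c).RecordedIn h ↔ (s(a, b), c) ∈ h ∧ G.RecordedIn h ∧ H.RecordedIn h := by
  simp only [RecordedIn, mem_edges_join, or_imp, forall_and, forall_eq]

theorem join_comm : G.join H a b c = H.join G b a c := by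
  simp only [join, union_comm, Sym2.eq_swap]

theorem join_right_comm :
    (A.join B a b c).join H p q i = (A.join H p q i).join B a b c := by
  simp only [join, union_right_comm, insert_union]
  rw [insert_comm]

theorem le_join_left : G ≤ G.join H a b c :=
  ⟨subset_union_left, subset_union_left.trans (subset_insert _ _)⟩

theorem le_join_right : H ≤ G.join H a b c :=
  ⟨subset_union_right, subset_union_right.trans (subset_insert _ _)⟩

theorem Joinable.card_verts (j : G.Joinable H a b c) :
    #(G.join H a b c).verts = #G.verts + #H.verts := card_union_of_disjoint j.disjoint

end join

/-- Trees whose edge colouring is proper, built up by joining two smaller trees by an edge. -/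
inductive IsProperTree : ColoredGraph V C → Prop
  | single (v : V) : IsProperTree (single v)
  | join {G H : ColoredGraph V C} {a b : V} {c : C} (hG : IsProperTree G) (hH : IsProperTree H)
      (j : G.Joinable H a b c) : IsProperTree (G.join H a b c)

namespace IsProperTree

variable {T : ColoredGraph V C}

theorem mem_verts (hT : T.IsProperTree) {x : Sym2 V × C} (hx : x ∈ T.edges) {v : V}
    (hv : v ∈ x.1) : v ∈ T.verts := by
  induction hT with
  | single => simp at hx
  | join _ _ j ihG ihH =>
    rcases mem_edges_join.1 hx with rfl | hx | hx
    · rcases Sym2.mem_iff.1 hv with rfl | rfl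
      · exact mem_union_left _ j.left_mem
      · exact mem_union_right _ j.right_mem
    · exact mem_union_left _ (ihG hx)
    · exact mem_union_right _ (ihH hx)

theorem misses_of_notMem (hT : T.IsProperTree) {v : V} (hv : v ∉ T.verts) (c : C) :
    T.Misses v c := fun _ hx hvx => absurd (hT.mem_verts hx hvx) hv

theorem verts_nonempty (hT : T.IsProperTree) : T.verts.Nonempty := by
  cases hT with
  | single v => exact singleton_nonempty v
  | join _ _ j => exact ⟨_, mem_union_left _ j.left_mem⟩

theorem not_isDiag (hT : T.IsProperTree) {x : Sym2 V × C} (hx : x ∈ T.edges) :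
    ¬ x.1.IsDiag := by
  induction hT with
  | single => simp at hx
  | join _ _ j ihG ihH =>
    rcases mem_edges_join.1 hx with rfl | hx | hx
    · rw [Sym2.mk_isDiag_iff]
      exact disjoint_iff_ne.1 j.disjoint _ j.left_mem _ j.right_mem
    · exact ihG hx
    · exact ihH hx

theorem disjoint_edges {G H : ColoredGraph V C} (hG : G.IsProperTree) (hH : H.IsProperTree)
    (hGH : Disjoint G.verts H.verts) : Disjoint G.edges H.edges :=
  disjoint_left.2 fun x hxG hxH => disjoint_left.1 hGH
    (hG.mem_verts hxG x.1.out_fst_mem) (hH.mem_verts hxH x.1.out_fst_mem)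

theorem card_edges (hT : T.IsProperTree) : #T.edges + 1 = #T.verts := by
  induction hT with
  | single => rfl
  | @join G H a b c hG hH j ihG ihH =>
    have hab : (s(a, b), c) ∉ G.edges ∪ H.edges := fun h => (mem_union.1 h).elim
      (fun h => j.left_misses _ h (Sym2.mem_mk_left a b) rfl)
      (fun h => j.right_misses _ h (Sym2.mem_mk_right a b) rfl)
    rw [j.card_verts, ← ihG, ← ihH, ColoredGraph.join, card_insert_of_notMem hab,
      card_union_of_disjoint (hG.disjoint_edges hH j.disjoint)]
    omega

theorem edge_unique (hT : T.IsProperTree) {x y : Sym2 V × C} (hx : x ∈ T.edges)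
    (hy : y ∈ T.edges) {v : V} (hvx : v ∈ x.1) (hvy : v ∈ y.1) (hxy : x.2 = y.2) : x = y := by
  induction hT with
  | single => simp at hx
  | @join G H a b c hG hH j ihG ihH =>
    have new_misses {z : Sym2 V × C} (hz : z ∈ G.edges ∨ z ∈ H.edges) (hvz : v ∈ z.1)
        (hv : v ∈ s(a, b)) : z.2 ≠ c := by
      rcases Sym2.mem_iff.1 hv with rfl | rfl
      · exact hz.elim (j.left_misses z · hvz) (hH.misses_of_notMem
          (disjoint_left.1 j.disjoint j.left_mem) c z · hvz)
      · exact hz.elim (hG.misses_of_notMem (disjoint_right.1 j.disjoint j.right_mem) c z · hvz)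
          (j.right_misses z · hvz)
    rcases mem_edges_join.1 hx with rfl | hx' <;> rcases mem_edges_join.1 hy with rfl | hy'
    · rfl
    · exact absurd hxy.symm (new_misses hy' hvy hvx)
    · exact absurd hxy (new_misses hx' hvx hvy)
    · have hv : v ∈ G.verts → v ∉ H.verts := fun h => disjoint_left.1 j.disjoint h
      rcases hx' with hx' | hx' <;> rcases hy' with hy' | hy'
      · exact ihG hx' hy'
      · exact absurd (hH.mem_verts hy' hvy) (hv (hG.mem_verts hx' hvx))
      · exact absurd (hH.mem_verts hx' hvx) (hv (hG.mem_verts hy' hvy))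
      · exact ihH hx' hy'

theorem exists_bipartition (hT : T.IsProperTree) :
    ∃ f : V → Bool, ∀ a b c, (s(a, b), c) ∈ T.edges → f a ≠ f b := by
  induction hT with
  | single => exact ⟨fun _ => true, by simp⟩
  | @join G H p q i hG hH j ihG ihH =>
    obtain ⟨f, hf⟩ := ihG
    obtain ⟨g, hg⟩ := ihH
    refine ⟨fun v => if v ∈ G.verts then f v else xor (g v) (xor (g q) !(f p)),
      fun a b c hx => ?_⟩
    have hp := j.left_mem
    have hq := disjoint_right.1 j.disjoint j.right_mem
    rcases mem_edges_join.1 hx with hx | hx | hx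
    · rw [Prod.mk.injEq, Sym2.eq_iff] at hx
      obtain ⟨⟨rfl, rfl⟩ | ⟨rfl, rfl⟩, -⟩ := hx
      · simp [hp, hq]
      · simp [hp, hq]
    · simpa [hG.mem_verts hx (Sym2.mem_mk_left a b), hG.mem_verts hx (Sym2.mem_mk_right a b)]
        using hf a b c hx
    · simpa [disjoint_right.1 j.disjoint (hH.mem_verts hx (Sym2.mem_mk_left a b)),
        disjoint_right.1 j.disjoint (hH.mem_verts hx (Sym2.mem_mk_right a b))] using hg a b c hx

end IsProperTree

/-- `T.IsCut a b c G H` says that deleting the edge `ab`, of colour `c`, splits the properly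
coloured tree `T` into `G`, containing `a`, and `H`, containing `b`. -/
structure IsCut (T : ColoredGraph V C) (a b : V) (c : C) (G H : ColoredGraph V C) : Prop where
  eq_join : T = G.join H a b c
  left : G.IsProperTree
  right : H.IsProperTree
  joinable : G.Joinable H a b c

section cut

variable {T G H A B : ColoredGraph V C} {a b p q : V} {c i : C}

theorem IsCut.symm (k : T.IsCut a b c G H) : T.IsCut b a c H G :=
  ⟨k.eq_join.trans join_comm, k.right, k.left, k.joinable.symm⟩

theorem IsCut.card_verts (k : T.IsCut a b c G H) : #T.verts = #G.verts + #H.verts := by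
  rw [k.eq_join, k.joinable.card_verts]

theorem IsCut.right_le (k : T.IsCut a b c G H) : H ≤ T := k.eq_join ▸ le_join_right

theorem IsCut.left_le (k : T.IsCut a b c G H) : G ≤ T := k.eq_join ▸ le_join_left

/-- Here `j` cuts `T` into `G` and `H`, and `k` cuts `G` in turn into `A` and `B`, with `H`
hanging on `A`. -/
theorem IsCut.extend (j : T.IsCut p q i G H) (k : G.IsCut a b c A B) (hp : p ∈ A.verts) :
    T.IsCut a b c (A.join H p q i) B := by
  have hAH : A.Joinable H p q i := j.joinable.mono_left k.left_le hp
  have haH : a ∉ H.verts := disjoint_left.1 j.joinable.disjoint (k.left_le.1 k.joinable.left_mem)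
  refine ⟨by rw [j.eq_join, k.eq_join, join_right_comm], k.left.join j.right hAH, k.right, ?_,
    mem_union_left _ k.joinable.left_mem, k.joinable.right_mem, misses_join.2 ⟨fun ha hic => ?_,
      k.joinable.left_misses, j.right.misses_of_notMem haH c⟩, k.joinable.right_misses⟩
  · exact disjoint_union_left.2
      ⟨k.joinable.disjoint, j.joinable.disjoint.symm.mono_right k.right_le.1⟩
  · rcases Sym2.mem_iff.1 ha with rfl | rfl
    · exact j.joinable.left_misses (s(a, b), c) (k.eq_join ▸ mem_edges_join_self)
        (Sym2.mem_mk_left a b) hic.symm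
    · exact haH j.joinable.right_mem

theorem IsCut.exists_extend (j : T.IsCut p q i G H) (k : G.IsCut a b c A B) :
    ∃ A' B', T.IsCut a b c A' B' := by
  have hp : p ∈ A.verts ∪ B.verts := by
    rw [← verts_join, ← k.eq_join]
    exact j.joinable.left_mem
  rcases mem_union.1 hp with hp | hp
  · exact ⟨_, _, j.extend k hp⟩
  · exact ⟨_, _, (j.extend k.symm hp).symm⟩

theorem IsProperTree.exists_isCut (hT : T.IsProperTree) (hab : (s(a, b), c) ∈ T.edges) :
    ∃ G H, T.IsCut a b c G H := by
  induction hT with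
  | single => simp at hab
  | @join G H p q i hG hH j ihG ihH =>
    have hcut : (G.join H p q i).IsCut p q i G H := ⟨rfl, hG, hH, j⟩
    rcases mem_edges_join.1 hab with hab | hab | hab
    · rw [Prod.mk.injEq, Sym2.eq_iff] at hab
      obtain ⟨⟨rfl, rfl⟩ | ⟨rfl, rfl⟩, rfl⟩ := hab
      · exact ⟨_, _, hcut⟩
      · exact ⟨_, _, hcut.symm⟩
    · obtain ⟨A, B, k⟩ := ihG hab
      exact hcut.exists_extend k
    · obtain ⟨A, B, k⟩ := ihH hab
      exact hcut.symm.exists_extend k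

/-- Every tree has a centroid. Starting from a smallest branch `H` with more than half of the
vertices, the branches at its root `b` are either smaller than `H` or the complement of `H`. -/
theorem IsProperTree.exists_centroid (hT : T.IsProperTree) :
    ∃ w ∈ T.verts, ∀ b c, (s(w, b), c) ∈ T.edges →
      ∃ G H, T.IsCut w b c G H ∧ 2 * #H.verts ≤ #T.verts := by
  by_contra! heavy
  have exists_heavy : ∃ m w b c G H, T.IsCut w b c G H ∧ #T.verts < 2 * #H.verts ∧
      #H.verts = m := by
    obtain ⟨w, hw⟩ := hT.verts_nonempty
    obtain ⟨b, c, hb, hheavy⟩ := heavy w hw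
    obtain ⟨G, H, k⟩ := hT.exists_isCut hb
    exact ⟨_, w, b, c, G, H, k, hheavy G H k, rfl⟩
  classical
  obtain ⟨w, b, c, G, H, k, hk, hm⟩ := Nat.find_spec exists_heavy
  obtain ⟨b', c', hb', hheavy⟩ := heavy b (k.right_le.1 k.joinable.right_mem)
  rw [k.eq_join, mem_edges_join] at hb'
  rcases hb' with hb' | hb' | hb'
  · rw [Prod.mk.injEq, Sym2.eq_iff] at hb'
    obtain ⟨⟨rfl, -⟩ | ⟨-, rfl⟩, rfl⟩ := hb'
    · exact disjoint_left.1 k.joinable.disjoint k.joinable.left_mem k.joinable.right_mem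
    · have := hheavy _ _ k.symm
      have := k.card_verts
      omega
  · exact disjoint_left.1 k.joinable.disjoint (k.left.mem_verts hb' (Sym2.mem_mk_left b b'))
      k.joinable.right_mem
  · obtain ⟨A, B, l⟩ := k.right.exists_isCut hb'
    have hext := k.symm.extend l l.joinable.left_mem
    have hmin := Nat.find_min' exists_heavy ⟨b, b', c', _, B, hext, hheavy _ _ hext, rfl⟩
    have hA := card_pos.2 l.left.verts_nonempty
    have := l.card_verts
    omega

end cut

end ColoredGraph

/-! ### Forcing -/

section forcing

variable {n t : ℕ} {h h' : GameHistory n t} {Q R : GameHistory n t → Prop} {c d k K : ℕ}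
  {e : Sym2 (Fin n)} {r : Fin t → ℕ}

/-- The moves available to Builder after the history `h`. -/
def IsLegalMove (h : GameHistory n t) (e : Sym2 (Fin n)) : Prop :=
  ¬ e.IsDiag ∧ e ∉ h.map Prod.fst

/-- From the history `h`, Builder can force the game into a history satisfying `Q`. A derivation
is a decision tree for Builder; there is no bound on the number of moves yet. -/
inductive BuilderForces (Q : GameHistory n t → Prop) : GameHistory n t → Prop
  | done {h : GameHistory n t} (hQ : Q h) : BuilderForces Q h
  | move {h : GameHistory n t} {e : Sym2 (Fin n)} (he : IsLegalMove h e)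
      (hF : ∀ i, BuilderForces Q (h ++ [(e, i)])) : BuilderForces Q h

theorem BuilderForces.bind (hF : BuilderForces Q h)
    (hQR : ∀ h', Q h' → BuilderForces R h') : BuilderForces R h := by
  induction hF with
  | done hQ => exact hQR _ hQ
  | move he _ ih => exact .move he ih

theorem BuilderForces.length_le [Nonempty (Fin t)] (hF : BuilderForces Q h)
    (hQ : ∀ h', Q h' → h'.length ≤ k) : h.length ≤ k := by
  induction hF with
  | done h => exact hQ _ h
  | move _ _ ih =>
    have := ih (Classical.arbitrary _)
    rw [List.length_append] at this
    omega

/-- From the history `h`, Builder can force `Q` within `c` further moves. -/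
def ForcesWithin (c : ℕ) (Q : GameHistory n t → Prop) (h : GameHistory n t) : Prop :=
  BuilderForces (fun h' => h ⊆ h' ∧ h'.length ≤ h.length + c ∧ Q h') h

namespace ForcesWithin

theorem of_holds (hQ : Q h) : ForcesWithin c Q h :=
  .done ⟨List.Subset.refl h, Nat.le_add_right _ _, hQ⟩

theorem bind (hF : ForcesWithin c Q h)
    (hQR : ∀ h', h ⊆ h' → Q h' → ForcesWithin d R h') : ForcesWithin (c + d) R h :=
  BuilderForces.bind hF fun _ ⟨hs₁, hl₁, hQ⟩ =>
    BuilderForces.bind (hQR _ hs₁ hQ) fun _ ⟨hs₂, hl₂, hR⟩ =>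
      .done ⟨List.Subset.trans hs₁ hs₂,
        (hl₂.trans (Nat.add_le_add_right hl₁ d)).trans_eq (Nat.add_assoc _ _ _), hR⟩

theorem mono (hF : ForcesWithin c Q h) (hcd : c ≤ d) : ForcesWithin d Q h :=
  BuilderForces.bind hF fun _ ⟨hs, hl, hQ⟩ => .done ⟨hs, hl.trans (Nat.add_le_add_left hcd _), hQ⟩

theorem query (he : ¬ e.IsDiag) : ForcesWithin 1 (fun h' => ∃ i, (e, i) ∈ h') h := by
  by_cases hmem : e ∈ h.map Prod.fst
  · obtain ⟨⟨_, i⟩, hx, rfl⟩ := List.mem_map.1 hmem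
    exact of_holds ⟨i, hx⟩
  · exact .move ⟨he, hmem⟩ fun i =>
      .done ⟨List.subset_append_left _ _, by simp, i, by simp⟩

end ForcesWithin

/-- Histories in which every move was legal. -/
def IsLegalHistory (h : GameHistory n t) : Prop :=
  (h.map Prod.fst).Nodup ∧ ∀ e ∈ h.map Prod.fst, ¬ e.IsDiag

theorem isLegalHistory_nil : IsLegalHistory ([] : GameHistory n t) := by simp [IsLegalHistory]

theorem IsLegalHistory.append (hh : IsLegalHistory h) (he : IsLegalMove h e) (i : Fin t) :
    IsLegalHistory (h ++ [(e, i)]) := by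
  rw [IsLegalHistory, List.map_append]
  refine ⟨hh.1.append (List.nodup_singleton _) (List.disjoint_singleton.2 he.2), fun f hf => ?_⟩
  rcases List.mem_append.1 hf with hf | hf
  · exact hh.2 f hf
  · exact List.mem_singleton.1 hf ▸ he.1

theorem BuilderForces.and_isLegalHistory (hF : BuilderForces Q h) (hh : IsLegalHistory h) :
    BuilderForces (fun h' => Q h' ∧ IsLegalHistory h') h := by
  induction hF with
  | done hQ => exact .done ⟨hQ, hh⟩
  | move he _ ih => exact .move he fun i => ih i (hh.append he i)

theorem card_nonloops (n : ℕ) : #{e : Sym2 (Fin n) | ¬ e.IsDiag} = n.choose 2 := by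
  rw [← Fintype.card_subtype, Sym2.card_subtype_not_diag, Fintype.card_fin]

theorem IsLegalHistory.length_le (hh : IsLegalHistory h) : h.length ≤ n.choose 2 := by
  rw [← List.length_map (f := Prod.fst), ← List.toFinset_card_of_nodup hh.1, ← card_nonloops]
  exact card_le_card fun e he => mem_filter.2 ⟨mem_univ _, hh.2 e (List.mem_toFinset.1 he)⟩

theorem exists_isLegalMove (hh : h.length < n.choose 2) : ∃ e, IsLegalMove h e := by
  rw [← List.length_map (f := Prod.fst), ← card_nonloops] at hh
  obtain ⟨e, he, hne⟩ := exists_mem_notMem_of_card_lt_card ((List.toFinset_card_le _).trans_lt hh)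
  exact ⟨e, (mem_filter.1 he).2, fun hmem => hne (List.mem_toFinset.2 hmem)⟩

theorem length_gamePlay (B : BuilderStrategy n t) (P : PainterStrategy n t) (k : ℕ) :
    (gamePlay B P k).length = k := by
  induction k with
  | zero => rfl
  | succ k ih => rw [gamePlay, List.length_append, ih, List.length_singleton]

theorem HistoryHasMatching.mono (hM : HistoryHasMatching n t r h) (hh : h ⊆ h') :
    HistoryHasMatching n t r h' :=
  let ⟨i, M, hcard, hM, hc⟩ := hM
  ⟨i, M, hcard, hM, fun e he => hh (hc e he)⟩

theorem BuilderForces.exists_move [Nonempty (Fin n)] (Q : GameHistory n t → Prop)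
    (h : GameHistory n t) : ∃ e, (h.length < n.choose 2 → IsLegalMove h e) ∧
      (BuilderForces Q h → Q h ∨ ∀ i, BuilderForces Q (h ++ [(e, i)])) := by
  by_cases hF : BuilderForces Q h ∧ ¬ Q h
  · cases hF.1 with
    | done hQ => exact absurd hQ hF.2
    | move he hF => exact ⟨_, fun _ => he, fun _ => .inr hF⟩
  · have hQ (hF' : BuilderForces Q h) : Q h := not_not.1 fun hQ => hF ⟨hF', hQ⟩
    by_cases hlt : h.length < n.choose 2
    · obtain ⟨e, he⟩ := exists_isLegalMove hlt
      exact ⟨e, fun _ => he, fun hF' => .inl (hQ hF')⟩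
    · have v := Classical.arbitrary (Fin n)
      exact ⟨s(v, v), fun hlt' => absurd hlt' hlt, fun hF' => .inl (hQ hF')⟩

theorem BuilderForces.builderWinsIn [Nonempty (Fin n)] [Nonempty (Fin t)] (hk : k ≤ n.choose 2)
    (hF : BuilderForces (fun h => h.length ≤ k ∧ HistoryHasMatching n t r h) []) :
    BuilderWinsIn n t r k := by
  choose B legal follows using
    exists_move fun h : GameHistory n t => h.length ≤ k ∧ HistoryHasMatching n t r h
  refine ⟨B, fun P j hj => legal _ (by rw [length_gamePlay]; omega), fun P => ?_⟩
  have invariant (j : ℕ) : HistoryHasMatching n t r (gamePlay B P j) ∨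
      BuilderForces (fun h => h.length ≤ k ∧ HistoryHasMatching n t r h) (gamePlay B P j) := by
    induction j with
    | zero => exact .inr hF
    | succ j ih =>
      rcases ih with hM | hF
      · exact .inl (hM.mono (List.subset_append_left _ _))
      · exact (follows _ hF).imp (fun hQ => hQ.2.mono (List.subset_append_left _ _)) (· _)
  rcases invariant k with hM | hF
  · exact hM
  · rcases follows _ hF with hQ | hF
    · exact hQ.2
    · have := (hF (Classical.arbitrary _)).length_le fun _ hQ => hQ.1
      rw [List.length_append, length_gamePlay, List.length_singleton] at this
      omega

theorem BuilderForces.restrictedOnlineRamsey_le [Nonempty (Fin n)] [Nonempty (Fin t)]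
    (hF : BuilderForces (fun h => h.length ≤ K ∧ HistoryHasMatching n t r h) []) :
    restrictedOnlineRamsey n t r ≤ K :=
  have hwin : BuilderWinsIn n t r (min K (n.choose 2)) :=
    builderWinsIn (min_le_right _ _) <| (hF.and_isLegalHistory isLegalHistory_nil).bind
      fun _ hQ => .done ⟨le_min hQ.1.1 hQ.2.length_le, hQ.1.2⟩
  (Nat.sInf_le hwin).trans (min_le_left _ _)

end forcing

/-! ### Merging a tree with a new edge -/

namespace ColoredGraph

variable {V C : Type*} [DecidableEq V] [DecidableEq C] {T T' X G H A : ColoredGraph V C}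
  {u v w b : V} {c d : C} {σ : V → V} {h h' : List (Sym2 V × C)}

/-- The graph consisting of one edge `uv` of colour `d`. -/
def edge (u v : V) (d : C) : ColoredGraph V C := (single u).join (single v) u v d

theorem verts_edge : (edge u v d).verts = {u, v} := rfl

theorem colors_edge : (edge u v d).colors = {d} := rfl

theorem isProperTree_edge (huv : u ≠ v) : (edge u v d).IsProperTree :=
  .join (.single u) (.single v) ⟨disjoint_singleton.2 huv, mem_singleton_self u,
    mem_singleton_self v, misses_single u u d, misses_single v v d⟩

theorem recordedIn_edge (huv : (s(u, v), d) ∈ h) : (edge u v d).RecordedIn h := fun _ hx =>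
  mem_singleton.1 hx ▸ huv

/-- `T'` arises by merging the tree `T` with the edge `uv` of colour `d`: no colour is lost and
one or two vertices are gained. -/
structure IsMerge (T : ColoredGraph V C) (u v : V) (d : C) (h : List (Sym2 V × C))
    (T' : ColoredGraph V C) : Prop where
  tree : T'.IsProperTree
  recorded : T'.RecordedIn h
  verts_subset : T'.verts ⊆ T.verts ∪ {u, v}
  card_verts : #T'.verts = #T.verts + 1 ∨ #T'.verts = #T.verts + 2
  colors_subset : insert d T.colors ⊆ T'.colors

/-- The situation in which Builder merges `T` with the edge `uv` of the new colour `d`: the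
vertex `w` of `T` is only ever joined to its partner `σ w`, and adjacent vertices have different
partners. -/
structure MergeSetup (T : ColoredGraph V C) (u v : V) (d : C) (σ : V → V)
    (h : List (Sym2 V × C)) : Prop where
  tree : T.IsProperTree
  recorded : T.RecordedIn h
  disjoint : Disjoint T.verts {u, v}
  ne : u ≠ v
  edge_mem : (s(u, v), d) ∈ h
  color_notMem : d ∉ T.colors
  partner_mem : ∀ w, σ w ∈ ({u, v} : Finset V)
  partner_ne : ∀ a b c, (s(a, b), c) ∈ T.edges → σ a ≠ σ b

namespace MergeSetup

theorem mono (S : T.MergeSetup u v d σ h) (hh : h ⊆ h') : T.MergeSetup u v d σ h' :=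
  { S with recorded := S.recorded.mono hh, edge_mem := hh S.edge_mem }

theorem partner_notMem (S : T.MergeSetup u v d σ h) (w : V) : σ w ∉ T.verts :=
  disjoint_right.1 S.disjoint (S.partner_mem w)

theorem joinable_edge (S : T.MergeSetup u v d σ h) (hA : A ≤ T) (hw : w ∈ A.verts)
    (hc : A.Misses w c) (hcd : c ≠ d) : A.Joinable (edge u v d) w (σ w) c :=
  ⟨S.disjoint.mono_left hA.1, hw, S.partner_mem w, hc,
    misses_of_notMem_colors (by simpa only [colors_edge, mem_singleton]) _⟩

theorem recordedIn_join_edge (S : T.MergeSetup u v d σ h) (hA : A ≤ T)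
    (hans : (s(w, σ w), c) ∈ h) : (A.join (edge u v d) w (σ w) c).RecordedIn h :=
  recordedIn_join.2 ⟨hans, fun x hx => S.recorded x (hA.2 hx), recordedIn_edge S.edge_mem⟩

theorem exists_isMerge_of_misses (S : T.MergeSetup u v d σ h) (hw : w ∈ T.verts)
    (hc : T.Misses w c) (hans : (s(w, σ w), c) ∈ h) : ∃ T', T.IsMerge u v d h T' := by
  by_cases hcd : c = d
  · subst hcd
    have j : T.Joinable (single (σ w)) w (σ w) c :=
      ⟨disjoint_singleton_right.2 (S.partner_notMem w), hw, mem_singleton_self _, hc,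
        misses_single _ _ _⟩
    refine ⟨_, S.tree.join (.single _) j,
      recordedIn_join.2 ⟨hans, S.recorded, by simp [RecordedIn]⟩,
      union_subset_union_right (singleton_subset_iff.2 (S.partner_mem w)), .inl j.card_verts, ?_⟩
    rw [colors_join]
    exact insert_subset_insert _ subset_union_left
  · have j := S.joinable_edge le_rfl hw hc hcd
    refine ⟨_, S.tree.join (isProperTree_edge S.ne) j, S.recordedIn_join_edge le_rfl hans,
      subset_rfl, .inr (by rw [j.card_verts, verts_edge, card_pair S.ne]), ?_⟩
    rw [colors_join, colors_edge, union_comm, ← insert_eq]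
    exact subset_insert _ _

theorem color_ne (S : T.MergeSetup u v d σ h) (k : T.IsCut w b c G H) : c ≠ d := by
  rintro rfl
  exact S.color_notMem (k.eq_join ▸ mem_colors.2 ⟨_, mem_edges_join_self, rfl⟩)

theorem exists_isMerge_of_leaf (S : T.MergeSetup u v d σ h) (k : T.IsCut w b c G (single b))
    (hans : (s(w, σ w), c) ∈ h) : ∃ T', T.IsMerge u v d h T' := by
  have j := S.joinable_edge k.left_le k.joinable.left_mem k.joinable.left_misses (S.color_ne k)
  refine ⟨_, k.left.join (isProperTree_edge S.ne) j, S.recordedIn_join_edge k.left_le hans,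
    union_subset_union_left k.left_le.1, .inl ?_, ?_⟩
  · rw [j.card_verts, k.card_verts, verts_edge, card_pair S.ne, card_verts_single]
  · rw [k.eq_join]
    simp only [colors_join, colors_edge, colors_single, subset_iff, mem_insert, mem_union,
      mem_singleton]
    tauto

theorem exists_isMerge_of_branch (S : T.MergeSetup u v d σ h) (k : T.IsCut w b c G H)
    (hw : (s(w, σ w), c) ∈ h) (hb : (s(b, σ b), c) ∈ h) : ∃ T', T.IsMerge u v d h T' := by
  have hcd := S.color_ne k
  have j := S.joinable_edge k.left_le k.joinable.left_mem k.joinable.left_misses hcd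
  have hσ : σ w ≠ σ b := S.partner_ne w b c (k.eq_join ▸ mem_edges_join_self)
  have j' : (G.join (edge u v d) w (σ w) c).Joinable H (σ b) b c := by
    refine ⟨disjoint_union_left.2 ⟨k.joinable.disjoint, (S.disjoint.mono_left k.right_le.1).symm⟩,
      mem_union_right _ (S.partner_mem b), k.joinable.right_mem, misses_join.2 ⟨fun hmem => ?_,
        k.left.misses_of_notMem (fun hG => S.partner_notMem b (k.left_le.1 hG)) c,
        misses_of_notMem_colors (by simpa only [colors_edge, mem_singleton]) _⟩,
      k.joinable.right_misses⟩
    rcases Sym2.mem_iff.1 hmem with hw | hw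
    · exact absurd (k.left_le.1 (hw ▸ k.joinable.left_mem)) (S.partner_notMem b)
    · exact absurd hw.symm hσ
  refine ⟨_, (k.left.join (isProperTree_edge S.ne) j).join k.right j',
    recordedIn_join.2 ⟨Sym2.eq_swap ▸ hb, S.recordedIn_join_edge k.left_le hw,
      fun x hx => S.recorded x (k.right_le.2 hx)⟩, ?_, .inr ?_, ?_⟩
  · rw [verts_join, verts_join, k.eq_join, verts_join, union_right_comm, verts_edge]
  · rw [j'.card_verts, j.card_verts, k.card_verts, verts_edge, card_pair S.ne]
    omega
  · rw [k.eq_join]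
    simp only [colors_join, colors_edge, subset_iff, mem_insert, mem_union, mem_singleton]
    tauto

end MergeSetup

/-- Vertex `w` points into `X`: the edge from `w` to its partner has received the colour of an
edge of `X` at `w`. -/
def Points (X : ColoredGraph V C) (σ : V → V) (h : List (Sym2 V × C)) (w : V) : Prop :=
  ∃ b c, (s(w, b), c) ∈ X.edges ∧ (s(w, σ w), c) ∈ h

/-- A subtree `X` of `T` in which the search for a merge can be continued: every vertex of `X`
that has a neighbour outside `X` points into `X`. -/
structure IsCandidate (T : ColoredGraph V C) (σ : V → V) (h : List (Sym2 V × C))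
    (X : ColoredGraph V C) : Prop where
  tree : X.IsProperTree
  le : X ≤ T
  closed_or_points : ∀ w ∈ X.verts,
    (∀ x ∈ T.edges, w ∈ x.1 → x ∈ X.edges) ∨ X.Points σ h w

theorem IsCandidate.mono (hX : T.IsCandidate σ h X) (hh : h ⊆ h') : T.IsCandidate σ h' X :=
  ⟨hX.tree, hX.le, fun w hw => (hX.closed_or_points w hw).imp_right
    fun ⟨b, c, hb, hc⟩ => ⟨b, c, hb, hh hc⟩⟩

theorem IsCut.mem_branch (k : X.IsCut w b c G H) {x : Sym2 V × C} (hx : x ∈ X.edges) {a : V}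
    (ha : a ∈ H.verts) (hax : a ∈ x.1) : x ∈ ((single w).join H w b c).edges := by
  rw [k.eq_join] at hx
  rw [mem_edges_join] at hx ⊢
  rcases hx with hx | hx | hx
  · exact .inl hx
  · exact absurd (k.left.mem_verts hx hax) (disjoint_right.1 k.joinable.disjoint ha)
  · exact .inr (.inr hx)

theorem IsCandidate.branch (hX : T.IsCandidate σ h X) (k : X.IsCut w b c G H)
    (hans : (s(w, σ w), c) ∈ h) :
    T.IsCandidate σ h ((single w).join H w b c) ∧ ((single w).join H w b c).Points σ h w ∧
      #((single w).join H w b c).edges = #H.verts := by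
  have j : (single w).Joinable H w b c :=
    k.joinable.mono_left (single_le k.joinable.left_mem) (mem_singleton_self w)
  have hB := (IsProperTree.single w).join k.right j
  have hw : ((single w).join H w b c).Points σ h w := ⟨b, c, mem_edges_join_self, hans⟩
  refine ⟨⟨hB, ⟨(union_subset (single_le (k.left_le.1 k.joinable.left_mem)).1
      k.right_le.1).trans hX.le.1, fun x hx => ?_⟩, fun a ha => ?_⟩, hw, ?_⟩
  · refine hX.le.2 (k.eq_join ▸ mem_edges_join.2 ?_)
    exact (mem_edges_join.1 hx).imp_right fun hx => .inr (hx.resolve_left (notMem_empty x))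
  · rcases mem_union.1 ha with ha | ha
    · exact .inr (mem_singleton.1 ha ▸ hw)
    · refine (hX.closed_or_points a (k.right_le.1 ha)).imp (fun hcl x hx hax => ?_) ?_
      · exact k.mem_branch (hcl x hx hax) ha hax
      · exact fun ⟨p, i, hp, hi⟩ => ⟨p, i, k.mem_branch hp ha (Sym2.mem_mk_left a p), hi⟩
  · have := hB.card_edges
    rw [j.card_verts, card_verts_single] at this
    omega

theorem IsProperTree.eq_single (hT : T.IsProperTree) (hb : b ∈ T.verts)
    (hiso : ∀ x ∈ T.edges, b ∉ x.1) : T = .single b := by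
  induction hT with
  | single v => rw [mem_singleton.1 hb]
  | @join G H p q i _ _ j ihG ihH =>
    have new := hiso _ mem_edges_join_self
    rcases mem_union.1 hb with hb | hb
    · have hp := ihG hb (fun x hx => hiso x (le_join_left.2 hx)) ▸ j.left_mem
      exact absurd (mem_singleton.1 hp ▸ Sym2.mem_mk_left p q) new
    · have hq := ihH hb (fun x hx => hiso x (le_join_right.2 hx)) ▸ j.right_mem
      exact absurd (mem_singleton.1 hq ▸ Sym2.mem_mk_right p q) new

theorem MergeSetup.exists_isMerge_of_candidate (S : T.MergeSetup u v d σ h)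
    (hX : T.IsCandidate σ h X) (hw : X.Points σ h w) (hcard : #X.edges ≤ 1) :
    ∃ T', T.IsMerge u v d h T' := by
  obtain ⟨b, c, hwb, hans⟩ := hw
  have only_edge {x : Sym2 V × C} (hx : x ∈ X.edges) : x = (s(w, b), c) :=
    card_le_one.1 hcard _ hx _ hwb
  obtain ⟨G, H, k⟩ := S.tree.exists_isCut (hX.le.2 hwb)
  rcases hX.closed_or_points b (hX.tree.mem_verts hwb (Sym2.mem_mk_right w b)) with hcl | hpt
  · have hH : H = single b := k.right.eq_single k.joinable.right_mem fun x hx hbx => by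
      have hxwb := only_edge (hcl x (k.right_le.2 hx) hbx)
      exact k.joinable.right_misses x hx hbx (congrArg Prod.snd hxwb)
    subst hH
    exact S.exists_isMerge_of_leaf k hans
  · obtain ⟨p, i, hp, hbans⟩ := hpt
    obtain rfl : i = c := congrArg Prod.snd (only_edge hp)
    exact S.exists_isMerge_of_branch k hans hbans

end ColoredGraph

section search

open ColoredGraph

variable {n t m : ℕ} {T X : ColoredGraph (Fin n) (Fin t)} {u v : Fin n} {d : Fin t}
  {σ : Fin n → Fin n} {h : GameHistory n t}

/-- The search for a merge of `T` has been narrowed down to a candidate with at most `m` edges,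
some vertex of which points into it. -/
def NarrowedTo (T : ColoredGraph (Fin n) (Fin t)) (σ : Fin n → Fin n) (m : ℕ)
    (h : GameHistory n t) : Prop :=
  ∃ X w, T.IsCandidate σ h X ∧ X.Points σ h w ∧ #X.edges ≤ m

/-- One step of the binary search: query the edge from a centroid of `X` to its partner. -/
theorem forcesWithin_merge_or_narrowedTo (S : T.MergeSetup u v d σ h) (hX : T.IsCandidate σ h X) :
    ForcesWithin 1 (fun h' => (∃ T', T.IsMerge u v d h' T') ∨
      NarrowedTo T σ ((#X.edges + 1) / 2) h') h := by
  obtain ⟨w, hw, centroid⟩ := hX.tree.exists_centroid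
  have narrow {h' : GameHistory n t} (hh : h ⊆ h') {b : Fin n} {c : Fin t}
      (hb : (s(w, b), c) ∈ X.edges) (hans : (s(w, σ w), c) ∈ h') :
      NarrowedTo T σ ((#X.edges + 1) / 2) h' := by
    obtain ⟨G, H, k, hH⟩ := centroid b c hb
    obtain ⟨hB, hpt, hcard⟩ := (hX.mono hh).branch k hans
    have := hX.tree.card_edges
    exact ⟨_, w, hB, hpt, by omega⟩
  rcases hX.closed_or_points w hw with hcl | ⟨b, c, hb, hans⟩
  · have hwT := hX.le.1 hw
    have hne : ¬ s(w, σ w).IsDiag := by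
      rw [Sym2.mk_isDiag_iff]
      exact ne_of_mem_of_not_mem hwT (S.partner_notMem w)
    refine (ForcesWithin.query hne).bind (d := 0) fun h' hh ⟨c, hans⟩ => .of_holds ?_
    by_cases hc : T.Misses w c
    · exact .inl ((S.mono hh).exists_isMerge_of_misses hwT hc hans)
    · simp only [Misses, not_forall, not_not] at hc
      obtain ⟨⟨e, _⟩, hx, hwe, rfl⟩ := hc
      obtain ⟨b, rfl⟩ := Sym2.mem_iff_exists.1 hwe
      exact .inr (narrow hh (hcl _ hx hwe) hans)
  · exact .of_holds (.inr (narrow (List.Subset.refl h) hb hans))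

theorem NarrowedTo.forcesWithin_merge (hN : NarrowedTo T σ m h) (S : T.MergeSetup u v d σ h) :
    ForcesWithin (Nat.clog 2 m) (fun h' => ∃ T', T.IsMerge u v d h' T') h := by
  induction m using Nat.strong_induction_on generalizing h with
  | _ m ih =>
    obtain ⟨X, w, hX, hpt, hcard⟩ := hN
    rcases Nat.lt_or_ge m 2 with hm | hm
    · exact .of_holds (S.exists_isMerge_of_candidate hX hpt (by omega))
    · rw [Nat.clog_of_two_le one_lt_two hm, add_comm]
      refine (forcesWithin_merge_or_narrowedTo S hX).bind fun h' hh hQ => ?_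
      rcases hQ with hM | ⟨Y, w', hY, hpt', hcard'⟩
      · exact .of_holds hM
      · exact ih _ (by omega) ⟨Y, w', hY, hpt', by omega⟩ (S.mono hh)

theorem clog_half_le_log (m : ℕ) : Nat.clog 2 ((m + 2) / 2) ≤ Nat.log 2 m := by
  refine Nat.clog_le_of_le_pow ?_
  have := Nat.lt_pow_succ_log_self one_lt_two m
  rw [pow_succ] at this
  omega

theorem ColoredGraph.IsProperTree.forcesWithin_merge (hT : T.IsProperTree)
    (hh : T.RecordedIn h) (hcard : #T.verts = m + 2) (huv : u ≠ v)
    (hdisj : Disjoint T.verts {u, v}) (he : (s(u, v), d) ∈ h) (hd : d ∉ T.colors) :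
    ForcesWithin (1 + Nat.log 2 m) (fun h' => ∃ T', T.IsMerge u v d h' T') h := by
  obtain ⟨f, hf⟩ := hT.exists_bipartition
  have S : T.MergeSetup u v d (fun w => if f w then u else v) h :=
    { tree := hT
      recorded := hh
      disjoint := hdisj
      ne := huv
      edge_mem := he
      color_notMem := hd
      partner_mem := fun w => by split <;> simp
      partner_ne := fun a b c hab => by
        have := hf a b c hab
        split <;> split <;> simp_all [huv.symm] }
  refine (forcesWithin_merge_or_narrowedTo S ⟨hT, le_rfl, fun w _ => .inl fun x hx _ => hx⟩).bind
    fun h' hh' hQ => ?_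
  rcases hQ with hM | hN
  · exact .of_holds hM
  · have hedges : (#T.edges + 1) / 2 = (m + 2) / 2 := by rw [hT.card_edges, hcard]
    rw [hedges] at hN
    exact (hN.forcesWithin_merge (S.mono hh')).mono (clog_half_le_log m)

end search

/-! ### Builder's strategy -/

/-- An upper bound for the number of moves spent on a tree that is the result of `m` merges, `k`
of which gained two vertices: one for the first edge and, for every merge, one for the new edge
and `1 + Nat.log 2 _` for the search. -/
def pieceCost (m k : ℕ) : ℕ := 1 + 2 * m + ∑ j ∈ Ico 1 m, Nat.log 2 (j + k)

theorem pieceCost_add_le_succ {m k k' : ℕ} (hkm : k ≤ m) (hk : k ≤ k') :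
    pieceCost m k + (2 + Nat.log 2 (m + k)) ≤ pieceCost (m + 1) k' := by
  have hmono (j : ℕ) : Nat.log 2 (j + k) ≤ Nat.log 2 (j + k') := Nat.log_mono_right (by omega)
  rcases Nat.eq_zero_or_pos m with rfl | hm
  · obtain rfl : k = 0 := by omega
    simp [pieceCost]
  · have := sum_le_sum fun j (_ : j ∈ Ico 1 m) => hmono j
    have := hmono m
    rw [pieceCost, pieceCost, sum_Ico_succ_top (show 1 ≤ m from hm)]
    omega

section pieces

open ColoredGraph

variable {n t : ℕ} {h h' : GameHistory n t}

/-- A tree built by Builder, together with the number of merges it results from and the number of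
those merges that gained two vertices. -/
structure Piece (n t : ℕ) extends ColoredGraph (Fin n) (Fin t) where
  merges : ℕ
  doubleMerges : ℕ

/-- The piece `p` has been built in the course of the history `h`. -/
structure Piece.IsBuiltIn (p : Piece n t) (h : GameHistory n t) : Prop where
  tree : p.IsProperTree
  recorded : p.RecordedIn h
  card_verts : #p.verts = p.merges + p.doubleMerges + 2
  double_le : p.doubleMerges ≤ p.merges
  lt_card_colors : p.merges < #p.colors

/-- The bound `pieceCost` for the piece `p`. -/
def Piece.cost (p : Piece n t) : ℕ := pieceCost p.merges p.doubleMerges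

theorem Piece.IsBuiltIn.mono {p : Piece n t} (hp : p.IsBuiltIn h) (hh : h ⊆ h') :
    p.IsBuiltIn h' :=
  { hp with recorded := hp.recorded.mono hh }

theorem Piece.isBuiltIn_edge {u v : Fin n} {d : Fin t} (huv : u ≠ v) (he : (s(u, v), d) ∈ h) :
    Piece.IsBuiltIn ⟨edge u v d, 0, 0⟩ h :=
  ⟨isProperTree_edge huv, recordedIn_edge he, card_pair huv, le_rfl, Nat.zero_lt_one⟩

theorem Piece.IsBuiltIn.exists_merge {p : Piece n t} (hp : p.IsBuiltIn h) {u v : Fin n} {d : Fin t}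
    {T : ColoredGraph (Fin n) (Fin t)} (hM : p.IsMerge u v d h' T) (hd : d ∉ p.colors) :
    ∃ q : Piece n t, q.toColoredGraph = T ∧ q.IsBuiltIn h' ∧
      p.cost + (2 + Nat.log 2 (p.merges + p.doubleMerges)) ≤ q.cost := by
  have hcolors : p.merges + 1 < #T.colors := by
    have := card_le_card hM.colors_subset
    rw [card_insert_of_notMem hd] at this
    exact (Nat.succ_lt_succ hp.lt_card_colors).trans_le this
  have hcard := hp.card_verts
  have hle := hp.double_le
  rcases hM.card_verts with hT | hT
  · exact ⟨⟨T, p.merges + 1, p.doubleMerges⟩, rfl,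
      ⟨hM.tree, hM.recorded, show #T.verts = _ by grind, by grind, hcolors⟩,
      pieceCost_add_le_succ hle le_rfl⟩
  · exact ⟨⟨T, p.merges + 1, p.doubleMerges + 1⟩, rfl,
      ⟨hM.tree, hM.recorded, show #T.verts = _ by grind, by grind, hcolors⟩,
      pieceCost_add_le_succ hle (Nat.le_succ _)⟩

/-- The invariant of Builder's strategy: `P` is a set of disjoint pieces, all of which use the
colour `i`. -/
structure IsConfiguration (h : GameHistory n t) (P : Finset (Piece n t)) (i : Fin t) : Prop where
  built : ∀ p ∈ P, p.IsBuiltIn h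
  color_mem : ∀ p ∈ P, i ∈ p.colors
  disjoint : (P : Set (Piece n t)).PairwiseDisjoint fun p => p.verts

namespace IsConfiguration

variable {P : Finset (Piece n t)} {i : Fin t} {p q : Piece n t}

theorem mono (hC : IsConfiguration h P i) (hh : h ⊆ h') : IsConfiguration h' P i :=
  { hC with built := fun p hp => (hC.built p hp).mono hh }

theorem subset {Q : Finset (Piece n t)} (hC : IsConfiguration h P i) (hQ : Q ⊆ P) :
    IsConfiguration h Q i where
  built p hp := hC.built p (hQ hp)
  color_mem p hp := hC.color_mem p (hQ hp)
  disjoint := hC.disjoint.subset (coe_subset.2 hQ)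

open scoped Classical in
protected theorem insert (hC : IsConfiguration h P i) (hq : q.IsBuiltIn h) (hi : i ∈ q.colors)
    (hd : ∀ p ∈ P, Disjoint q.verts p.verts) : IsConfiguration h (insert q P) i where
  built := forall_mem_insert _ _ _ |>.2 ⟨hq, hC.built⟩
  color_mem := forall_mem_insert _ _ _ |>.2 ⟨hi, hC.color_mem⟩
  disjoint := by
    rw [coe_insert]
    exact hC.disjoint.insert fun p hp _ => hd p hp

theorem notMem (hq : q.IsBuiltIn h) (hd : ∀ p ∈ P, Disjoint q.verts p.verts) : q ∉ P :=
  fun hqP => hq.tree.verts_nonempty.ne_empty (disjoint_self.1 (hd q hqP))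

theorem sum_card_verts_le (hC : IsConfiguration h P i) : ∑ p ∈ P, #p.verts ≤ n := by
  rw [← card_biUnion hC.disjoint]
  exact (card_le_univ _).trans_eq (Fintype.card_fin n)

theorem exists_uncovered (hC : IsConfiguration h P i) (hn : ∑ p ∈ P, #p.verts + 1 < n) :
    ∃ u v, u ≠ v ∧ ∀ p ∈ P, Disjoint p.verts {u, v} := by
  have hcard : 1 < #(P.biUnion fun p => p.verts)ᶜ := by
    rw [card_compl, card_biUnion hC.disjoint, Fintype.card_fin]
    omega
  obtain ⟨u, hu, v, hv, huv⟩ := one_lt_card.1 hcard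
  simp only [mem_compl, mem_biUnion, not_exists, not_and] at hu hv
  exact ⟨u, v, huv, fun p hp => by simp [hu p hp, hv p hp]⟩

theorem exists_insert_edge (hC : IsConfiguration h P i) {u v : Fin n} {d : Fin t} (huv : u ≠ v)
    (hd : (s(u, v), d) ∈ h) (hfree : ∀ p ∈ P, Disjoint p.verts {u, v})
    (hcolor : ∀ p ∈ P, d ∈ p.colors) :
    ∃ Q, IsConfiguration h Q d ∧ ∑ p ∈ Q, p.cost = ∑ p ∈ P, p.cost + 1 ∧
      ∑ p ∈ P, #p.verts < ∑ p ∈ Q, #p.verts := by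
  classical
  have hE := Piece.isBuiltIn_edge huv hd
  have hdisj (p : Piece n t) (hp : p ∈ P) : Disjoint (edge u v d).verts p.verts :=
    (hfree p hp).symm
  have hnew := notMem hE hdisj
  refine ⟨_, { hC with color_mem := hcolor }.insert hE (mem_singleton_self d) hdisj, ?_, ?_⟩
  · rw [sum_insert hnew, add_comm]
    rfl
  · rw [sum_insert hnew, hE.card_verts]
    omega

theorem forcesWithin_merge (hC : IsConfiguration h P i) {u v : Fin n} {d : Fin t} (huv : u ≠ v)
    (hd : (s(u, v), d) ∈ h) (hfree : ∀ p ∈ P, Disjoint p.verts {u, v}) (hpP : p ∈ P)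
    (hdp : d ∉ p.colors) :
    ForcesWithin (1 + Nat.log 2 (p.merges + p.doubleMerges)) (fun h' => ∃ Q,
      IsConfiguration h' Q i ∧ ∑ p ∈ P, #p.verts < ∑ p ∈ Q, #p.verts ∧
      ∑ p ∈ P, p.cost + (2 + Nat.log 2 (p.merges + p.doubleMerges)) ≤ ∑ p ∈ Q, p.cost) h := by
  classical
  have hp := hC.built p hpP
  refine (hp.tree.forcesWithin_merge hp.recorded hp.card_verts huv (hfree p hpP) hd hdp).bind
    (d := 0) fun h' hh' ⟨T, hM⟩ => .of_holds ?_
  obtain ⟨q, rfl, hq, hcost⟩ := hp.exists_merge hM hdp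
  have hdisj : ∀ p' ∈ P.erase p, Disjoint q.verts p'.verts := by
    refine fun p' hp' => (disjoint_union_left.2 ⟨?_, ?_⟩).mono_left hM.verts_subset
    · exact hC.disjoint hpP (mem_of_mem_erase hp') (ne_of_mem_erase hp').symm
    · exact (hfree p' (mem_of_mem_erase hp')).symm
  have hnew := notMem hq hdisj
  refine ⟨_, ((hC.mono hh').subset (erase_subset p P)).insert hq
    (hM.colors_subset (mem_insert_of_mem (hC.color_mem p hpP))) hdisj, ?_, ?_⟩
  · have := hM.card_verts
    rw [sum_insert hnew, ← add_sum_erase P _ hpP]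
    omega
  · rw [sum_insert hnew, ← add_sum_erase P _ hpP]
    omega

/-- Builder queries an edge between two uncovered vertices. If its colour occurs on all pieces,
then the edge becomes a piece of its own and its colour the common one. Otherwise it is merged
into a piece that misses its colour. -/
theorem forces_cover_more (hC : IsConfiguration h P i) (hlen : h.length ≤ ∑ p ∈ P, p.cost)
    (hn : ∑ p ∈ P, #p.verts + 1 < n) :
    BuilderForces (fun h' => ∃ Q j, IsConfiguration h' Q j ∧ h'.length ≤ ∑ p ∈ Q, p.cost ∧
      ∑ p ∈ P, #p.verts < ∑ p ∈ Q, #p.verts) h := by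
  obtain ⟨u, v, huv, hfree⟩ := hC.exists_uncovered hn
  refine BuilderForces.bind (ForcesWithin.query (e := s(u, v)) huv)
    fun h₁ ⟨hh₁, hlen₁, d, hd⟩ => ?_
  have hC₁ := hC.mono hh₁
  by_cases hcolor : ∀ p ∈ P, d ∈ p.colors
  · obtain ⟨Q, hQ, hcost, hverts⟩ := hC₁.exists_insert_edge huv hd hfree hcolor
    exact .done ⟨Q, d, hQ, hcost ▸ hlen₁.trans (Nat.add_le_add_right hlen 1), hverts⟩
  · push Not at hcolor
    obtain ⟨p, hpP, hdp⟩ := hcolor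
    refine BuilderForces.bind (hC₁.forcesWithin_merge huv hd hfree hpP hdp)
      fun h₂ ⟨_, hlen₂, Q, hQ, hverts, hcost⟩ => ?_
    exact .done ⟨Q, i, hQ, hlen₂.trans (by omega), hverts⟩

theorem forces_cover_all (hC : IsConfiguration h P i) (hlen : h.length ≤ ∑ p ∈ P, p.cost) :
    BuilderForces (fun h' => ∃ Q j, IsConfiguration h' Q j ∧ h'.length ≤ ∑ p ∈ Q, p.cost ∧
      n ≤ ∑ p ∈ Q, #p.verts + 1) h := by
  induction hk : n - ∑ p ∈ P, #p.verts using Nat.strong_induction_on generalizing h P i with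
  | _ k ih =>
    by_cases hn : ∑ p ∈ P, #p.verts + 1 < n
    · refine (hC.forces_cover_more hlen hn).bind fun h' ⟨Q, j, hQ, hlen', hlt⟩ => ?_
      exact ih _ (by omega) hQ hlen' rfl
    · exact .done ⟨P, i, hC, hlen, by omega⟩

end IsConfiguration

end pieces

/-! ### Colour classes as matchings -/

theorem exists_le_card_fiber {α ι : Type*} [Fintype ι] [DecidableEq ι] {s : Finset α} {r : ι → ℕ}
    (h : ∑ j, (r j - 1) < #s) (f : α → ι) : ∃ j, r j ≤ #{x ∈ s | f x = j} := by
  by_contra! hlt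
  rw [card_eq_sum_card_fiberwise fun x _ => mem_univ (f x)] at h
  exact h.not_ge (sum_le_sum fun j _ => Nat.le_sub_one_of_lt (hlt j))

theorem IsMatchingIn.subset {n : ℕ} {M M' : Finset (Sym2 (Fin n))} (hM : IsMatchingIn M)
    (h : M' ⊆ M) : IsMatchingIn M' :=
  ⟨fun e he => hM.1 e (h he), hM.2.mono (coe_subset.2 h)⟩

section counting

variable {n t : ℕ} {h : GameHistory n t} {P : Finset (Piece n t)} {i : Fin t} {r : Fin t → ℕ}

theorem HistoryHasMatching.of_le_card_color {F : Finset (Sym2 (Fin n) × Fin t)} {j : Fin t}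
    (hF : ∀ x ∈ F, x ∈ h) (hdiag : ∀ x ∈ F, ¬ x.1.IsDiag)
    (hproper : ∀ x ∈ F, ∀ y ∈ F, ∀ v, v ∈ x.1 → v ∈ y.1 → x.2 = y.2 → x = y)
    (hj : r j ≤ #{x ∈ F | x.2 = j}) : HistoryHasMatching n t r h := by
  obtain ⟨N, hN, hcard⟩ := exists_subset_card_eq hj
  have hNF {x : Sym2 (Fin n) × Fin t} (hx : x ∈ N) : x ∈ F ∧ x.2 = j := mem_filter.1 (hN hx)
  have hinj : Set.InjOn Prod.fst (N : Set (Sym2 (Fin n) × Fin t)) := fun x hx y hy hxy =>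
    Prod.ext hxy ((hNF hx).2.trans (hNF hy).2.symm)
  refine ⟨j, N.image Prod.fst, by rw [card_image_of_injOn hinj, hcard], ⟨?_, ?_⟩, ?_⟩
  · exact forall_mem_image.2 fun x hx => hdiag x (hNF hx).1
  · rw [coe_image]
    rintro _ ⟨x, hx, rfl⟩ _ ⟨y, hy, rfl⟩ hxy v hvx hvy
    exact hxy (congrArg Prod.fst (hproper x (hNF hx).1 y (hNF hy).1 v hvx hvy
      ((hNF hx).2.trans (hNF hy).2.symm)))
  · exact forall_mem_image.2 fun x hx => (hNF hx).2 ▸ hF x (hNF hx).1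

namespace IsConfiguration

theorem historyHasMatching_of_le_card (hC : IsConfiguration h P i) {j : Fin t}
    (hj : r j ≤ #{x ∈ P.biUnion fun p => p.edges | x.2 = j}) : HistoryHasMatching n t r h := by
  refine .of_le_card_color (fun x hx => ?_) (fun x hx => ?_)
    (fun x hx y hy v hvx hvy hxy => ?_) hj
  · obtain ⟨p, hp, hx⟩ := mem_biUnion.1 hx
    exact (hC.built p hp).recorded x hx
  · obtain ⟨p, hp, hx⟩ := mem_biUnion.1 hx
    exact (hC.built p hp).tree.not_isDiag hx
  · obtain ⟨p, hp, hx⟩ := mem_biUnion.1 hx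
    obtain ⟨q, hq, hy⟩ := mem_biUnion.1 hy
    have hv : v ∈ p.verts := (hC.built p hp).tree.mem_verts hx hvx
    obtain rfl : p = q := hC.disjoint.elim_finset hp hq v hv ((hC.built q hq).tree.mem_verts hy hvy)
    exact (hC.built p hp).tree.edge_unique hx hy hvx hvy hxy

theorem pairwiseDisjoint_edges (hC : IsConfiguration h P i) :
    (P : Set (Piece n t)).PairwiseDisjoint fun p => p.edges := fun p hp q hq hpq =>
  (hC.built p hp).tree.disjoint_edges (hC.built q hq).tree (hC.disjoint hp hq hpq)

theorem card_edges (hC : IsConfiguration h P i) :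
    #(P.biUnion fun p => p.edges) + #P = ∑ p ∈ P, #p.verts := by
  rw [card_biUnion hC.pairwiseDisjoint_edges, card_eq_sum_ones, ← sum_add_distrib]
  exact sum_congr rfl fun p hp => (hC.built p hp).tree.card_edges

theorem card_le_card_color (hC : IsConfiguration h P i) :
    #P ≤ #{x ∈ P.biUnion fun p => p.edges | x.2 = i} := by
  rw [filter_biUnion, card_biUnion fun p hp q hq hpq =>
    disjoint_filter_filter (hC.pairwiseDisjoint_edges hp hq hpq), card_eq_sum_ones]
  refine sum_le_sum fun p hp => card_pos.2 ?_
  obtain ⟨x, hx, hxi⟩ := ColoredGraph.mem_colors.1 (hC.color_mem p hp)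
  exact ⟨x, mem_filter.2 ⟨hx, hxi⟩⟩

theorem historyHasMatching (hC : IsConfiguration h P i) (hcover : n ≤ ∑ p ∈ P, #p.verts + 1)
    (hn : r i + 1 + ∑ j, (r j - 1) ≤ n) : HistoryHasMatching n t r h := by
  by_cases hi : r i ≤ #{x ∈ P.biUnion fun p => p.edges | x.2 = i}
  · exact hC.historyHasMatching_of_le_card hi
  · have hedges : ∑ j, (r j - 1) < #(P.biUnion fun p => p.edges) := by
      have := hC.card_edges
      have := hC.card_le_card_color
      omega
    obtain ⟨j, hj⟩ := exists_le_card_fiber hedges Prod.snd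
    exact hC.historyHasMatching_of_le_card hj

end IsConfiguration

end counting

/-! ### The Ramsey number of matchings -/

section ramsey

variable {t : ℕ} {r : Fin t → ℕ}

theorem exists_isMatchingIn_card_eq (m : ℕ) :
    ∃ M : Finset (Sym2 (Fin (2 * m))), #M = m ∧ IsMatchingIn M := by
  let f (k : Fin m) : Sym2 (Fin (2 * m)) := s(⟨2 * k, by omega⟩, ⟨2 * k + 1, by omega⟩)
  have half {k : Fin m} {v : Fin (2 * m)} (hv : v ∈ f k) : (v : ℕ) / 2 = k := by
    rcases Sym2.mem_iff.1 hv with rfl | rfl <;> dsimp only <;> omega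
  have disj {k l : Fin m} {v : Fin (2 * m)} (hk : v ∈ f k) (hl : v ∈ f l) : k = l :=
    Fin.ext ((half hk).symm.trans (half hl))
  have hinj : Function.Injective f := fun k l hkl => disj (Sym2.mem_mk_left _ _)
    (hkl ▸ Sym2.mem_mk_left _ _)
  refine ⟨univ.image f, by rw [card_image_of_injective _ hinj, card_fin], ?_, ?_⟩
  · simp [f]
  · rw [coe_image]
    rintro _ ⟨k, -, rfl⟩ _ ⟨l, -, rfl⟩ hkl v hk hl
    exact hkl (congrArg f (disj hk hl))

theorem exists_forall_coloringHasMatching (r : Fin t → ℕ) :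
    ∃ N, ∀ c : Sym2 (Fin N) → Fin t, ColoringHasMatching N t r c := by
  obtain ⟨M, hcard, hM⟩ := exists_isMatchingIn_card_eq (∑ j, (r j - 1) + 1)
  refine ⟨2 * (∑ j, (r j - 1) + 1), fun c => ?_⟩
  obtain ⟨j, hj⟩ := exists_le_card_fiber (s := M) (r := r) (by omega) c
  obtain ⟨M', hM', hcard'⟩ := exists_subset_card_eq hj
  exact ⟨j, M', hcard', hM.subset (hM'.trans (filter_subset _ _)),
    fun e he => (mem_filter.1 (hM' he)).2⟩

theorem IsMatchingIn.card_le {N : ℕ} {M : Finset (Sym2 (Fin N))} (hM : IsMatchingIn M)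
    {S : Finset (Fin N)} (h : ∀ e ∈ M, ∃ v ∈ S, v ∈ e) : #M ≤ #S :=
  card_le_card_of_forall_subsingleton (fun e v => v ∈ e) h fun v _ e he f hf => by
    by_contra hef
    exact hM.2 he.1 hf.1 hef v he.2 hf.2

theorem IsMatchingIn.two_mul_card_le {N : ℕ} {M : Finset (Sym2 (Fin N))} (hM : IsMatchingIn M)
    {S : Finset (Fin N)} (h : ∀ e ∈ M, ∀ v ∈ e, v ∈ S) : 2 * #M ≤ #S := by
  have hdisj : (M : Set (Sym2 (Fin N))).PairwiseDisjoint Sym2.toFinset :=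
    fun e he f hf hef => disjoint_left.2 fun v hve hvf =>
      hM.2 he hf hef v (Sym2.mem_toFinset.1 hve) (Sym2.mem_toFinset.1 hvf)
  calc 2 * #M = #(M.biUnion Sym2.toFinset) := by
        rw [card_biUnion hdisj, mul_comm]
        exact (sum_const_nat fun e he => Sym2.card_toFinset_of_not_isDiag e (hM.1 e he)).symm
    _ ≤ #S := card_le_card (biUnion_subset.2 fun e he v hv => h e he v (Sym2.mem_toFinset.1 hv))

theorem exists_labelling {V ι : Type*} [Fintype V] [Fintype ι] [DecidableEq ι] {s : ι → ℕ}
    (hs : Fintype.card V ≤ ∑ j, s j) : ∃ l : V → ι, ∀ j, #{v | l v = j} ≤ s j := by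
  obtain ⟨f⟩ : Nonempty (V ↪ Σ j, Fin (s j)) :=
    Function.Embedding.nonempty_of_card_le (by simpa using hs)
  refine ⟨fun v => (f v).1, fun j => ?_⟩
  calc #{v | (f v).1 = j} ≤ #(univ.map (Function.Embedding.sigmaMk (β := fun j => Fin (s j)) j)) :=
        card_le_card_of_injOn f (fun v hv => by
          obtain rfl := (mem_filter.1 hv).2
          exact mem_map.2 ⟨(f v).2, mem_univ _, rfl⟩) f.injective.injOn
    _ = s j := by rw [card_map, card_fin]

theorem exists_coloring_of_labelling {V ι : Type*} (l : V → ι) (i : ι) :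
    ∃ c : Sym2 V → ι, ∀ e, (c e = i → ∀ v ∈ e, l v = i) ∧ (c e ≠ i → ∃ v ∈ e, l v = c e) := by
  choose c hc using show ∀ e : Sym2 V, ∃ j,
      (j = i → ∀ v ∈ e, l v = i) ∧ (j ≠ i → ∃ v ∈ e, l v = j) from fun e => by
    by_cases h : ∀ v ∈ e, l v = i
    · exact ⟨i, fun _ => h, fun hi => absurd rfl hi⟩
    · push Not at h
      obtain ⟨v, hv, hvi⟩ := h
      exact ⟨l v, fun hi => absurd hi hvi, fun _ => ⟨v, hv, rfl⟩⟩
  exact ⟨c, hc⟩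

/-- The extremal colouring has `2 * r i - 1` vertices labelled `i`, `r j - 1` vertices labelled
`j` for every other `j`, and gives an edge a label other than `i` of one of its ends, if any. -/
theorem le_of_forall_coloringHasMatching (hr : ∀ j, 1 ≤ r j) {N : ℕ}
    (hN : ∀ c : Sym2 (Fin N) → Fin t, ColoringHasMatching N t r c) (i : Fin t) :
    r i + 1 + ∑ j, (r j - 1) ≤ N := by
  by_contra! hlt
  obtain ⟨l, hl⟩ : ∃ l : Fin N → Fin t, ∀ j, #{v | l v = j} ≤
      (if j = i then r i else 0) + (r j - 1) := by
    refine exists_labelling ?_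
    rw [sum_add_distrib, sum_ite_eq' univ i, if_pos (mem_univ i), Fintype.card_fin]
    omega
  obtain ⟨c, hc⟩ := exists_coloring_of_labelling l i
  obtain ⟨j, M, hcard, hM, hMc⟩ := hN c
  have hlj := hl j
  have hrj := hr j
  by_cases hj : j = i
  · subst hj
    have := hM.two_mul_card_le (S := {v | l v = j}) fun e he v hv =>
      mem_filter.2 ⟨mem_univ v, (hc e).1 (hMc e he) v hv⟩
    rw [if_pos rfl] at hlj
    omega
  · have := hM.card_le (S := {v | l v = j}) fun e he => by
      obtain ⟨v, hv, hvc⟩ := (hc e).2 (hMc e he ▸ hj)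
      exact ⟨v, mem_filter.2 ⟨mem_univ v, hvc.trans (hMc e he)⟩, hv⟩
    rw [if_neg hj] at hlj
    omega

theorem le_of_matchingRamsey_le (hr : ∀ j, 1 ≤ r j) {n : ℕ} (hn : matchingRamsey t r ≤ n)
    (i : Fin t) : r i + 1 + ∑ j, (r j - 1) ≤ n :=
  (le_of_forall_coloringHasMatching hr
    (Nat.sInf_mem (exists_forall_coloringHasMatching r)) i).trans hn

end ramsey

/-! ### The cost of a piece -/

theorem factorial_le_pow_pred (m : ℕ) : m.factorial ≤ m ^ (m - 1) := by
  rcases Nat.eq_zero_or_pos m with rfl | hm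
  · rfl
  · have := Nat.factorial_mul_descFactorial (Nat.sub_le m 1)
    rw [Nat.sub_sub_self hm, Nat.factorial_one, one_mul] at this
    exact this ▸ Nat.descFactorial_le_pow m (m - 1)

theorem ascFactorial_le_factorial_mul_pow (m k : ℕ) :
    (k + 1).ascFactorial m ≤ m.factorial * (m + 1) ^ k := by
  induction k with
  | zero => simp [Nat.one_ascFactorial]
  | succ k ih =>
    refine le_of_mul_le_mul_left ?_ k.succ_pos
    calc (k + 1) * (k + 1 + 1).ascFactorial m
        = (k + 1 + m) * (k + 1).ascFactorial m := Nat.succ_ascFactorial _ _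
      _ ≤ ((k + 1) * (m + 1)) * (m.factorial * (m + 1) ^ k) := by
        gcongr
        nlinarith
      _ = (k + 1) * (m.factorial * (m + 1) ^ (k + 1)) := by ring

theorem two_pow_sum_log_le (m k : ℕ) :
    2 ^ ∑ j ∈ Ico 1 (m + 1), Nat.log 2 (j + k) ≤ m ^ (m - 1) * (m + 1) ^ k := by
  calc 2 ^ ∑ j ∈ Ico 1 (m + 1), Nat.log 2 (j + k)
      = ∏ j ∈ range m, 2 ^ Nat.log 2 (k + 1 + j) := by
        rw [← prod_pow_eq_pow_sum, prod_Ico_eq_prod_range]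
        exact prod_congr rfl fun j _ => by congr 2; omega
    _ ≤ ∏ j ∈ range m, (k + 1 + j) :=
        prod_le_prod' fun j _ => Nat.pow_log_le_self 2 (by omega)
    _ = (k + 1).ascFactorial m := (Nat.ascFactorial_eq_prod_range _ _).symm
    _ ≤ m.factorial * (m + 1) ^ k := ascFactorial_le_factorial_mul_pow m k
    _ ≤ m ^ (m - 1) * (m + 1) ^ k := Nat.mul_le_mul_right _ (factorial_le_pow_pred m)

theorem succ_pow_pred_le_four_mul (m : ℕ) : (m + 1) ^ (m - 1) ≤ 4 * m ^ (m - 1) := by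
  rcases Nat.eq_zero_or_pos m with rfl | hm
  · norm_num
  have hm' : (0 : ℝ) < m := Nat.cast_pos.2 hm
  have hexp : (1 + 1 / (m : ℝ)) ^ (m - 1) ≤ 4 :=
    calc (1 + 1 / (m : ℝ)) ^ (m - 1) ≤ (1 + 1 / (m : ℝ)) ^ m :=
          pow_le_pow_right₀ (by simp) (Nat.sub_le m 1)
      _ ≤ Real.exp 1 := by simpa using Real.one_add_inv_pow_le_exp (n := m)
      _ ≤ 4 := by linarith [Real.exp_one_lt_three]
  have hreal : ((m : ℝ) + 1) ^ (m - 1) ≤ 4 * (m : ℝ) ^ (m - 1) :=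
    calc ((m : ℝ) + 1) ^ (m - 1) = (1 + 1 / (m : ℝ)) ^ (m - 1) * (m : ℝ) ^ (m - 1) := by
          rw [← mul_pow, add_mul, one_mul, one_div_mul_cancel hm'.ne']
      _ ≤ 4 * (m : ℝ) ^ (m - 1) := by gcongr
  exact_mod_cast hreal

theorem succ_pow_four_le {m : ℕ} (hm : 5 ≤ m) : (m + 1) ^ 4 ≤ 2 ^ (2 * m + 1) := by
  induction m, hm using Nat.le_induction with
  | base => norm_num
  | succ m hm ih =>
    calc (m + 1 + 1) ^ 4 = ((m + 1 + 1) ^ 2) ^ 2 := by ring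
      _ ≤ (2 * (m + 1) ^ 2) ^ 2 := Nat.pow_le_pow_left (by nlinarith) 2
      _ = 4 * (m + 1) ^ 4 := by ring
      _ ≤ 4 * 2 ^ (2 * m + 1) := Nat.mul_le_mul_left 4 ih
      _ = 2 ^ (2 * (m + 1) + 1) := by ring

theorem succ_pow_le_two_pow_mul (m : ℕ) :
    (m + 1) ^ (m + 3) ≤ 2 ^ (2 * m + 3) * m ^ (m - 1) := by
  rcases lt_or_ge m 5 with hm | hm
  · interval_cases m <;> norm_num
  · calc (m + 1) ^ (m + 3) = (m + 1) ^ 4 * (m + 1) ^ (m - 1) := by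
          rw [← pow_add]
          congr 1
          omega
      _ ≤ 2 ^ (2 * m + 1) * (4 * m ^ (m - 1)) :=
          Nat.mul_le_mul (succ_pow_four_le hm) (succ_pow_pred_le_four_mul m)
      _ = 2 ^ (2 * m + 3) * m ^ (m - 1) := by ring

/-- The number of moves per vertex of `K_n` that Builder needs when there are `t` colours. -/
noncomputable def builderRate (t : ℕ) : ℝ :=
  (2 * (t : ℝ) - 1 + ((t : ℝ) - 3) * Real.logb 2 ((t : ℝ) - 2)) / ((t : ℝ) + 1)

theorem builderRate_two : builderRate 2 = 1 := by norm_num [builderRate]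

theorem builderRate_eq (t : ℕ) : builderRate t =
    2 - 3 / ((t : ℝ) + 1) + (1 - 4 / ((t : ℝ) + 1)) * Real.logb 2 ((t : ℝ) - 2) := by
  have : (t : ℝ) + 1 ≠ 0 := by positivity
  rw [builderRate]
  field_simp
  ring

theorem one_le_builderRate {t : ℕ} (ht : 2 ≤ t) : 1 ≤ builderRate t := by
  rcases ht.eq_or_lt with rfl | ht
  · exact builderRate_two.ge
  · have ht' : (3 : ℝ) ≤ t := mod_cast ht
    have hlog : 0 ≤ ((t : ℝ) - 3) * Real.logb 2 ((t : ℝ) - 2) :=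
      mul_nonneg (by linarith) (Real.logb_nonneg one_lt_two (by linarith))
    rw [builderRate, le_div_iff₀ (by positivity)]
    linarith

theorem builderRate_le_builderRate {s t : ℕ} (hs : 2 ≤ s) (hst : s ≤ t) :
    builderRate s ≤ builderRate t := by
  rcases hs.eq_or_lt with rfl | hs
  · exact builderRate_two.trans_le (one_le_builderRate hst)
  · have hs' : (3 : ℝ) ≤ s := mod_cast hs
    have hst' : (s : ℝ) ≤ t := mod_cast hst
    have hlog : 0 ≤ Real.logb 2 ((s : ℝ) - 2) := Real.logb_nonneg one_lt_two (by linarith)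
    have hcoeff : 0 ≤ 1 - 4 / ((t : ℝ) + 1) := by
      rw [sub_nonneg, div_le_one (by positivity)]
      linarith
    rw [builderRate_eq, builderRate_eq]
    gcongr
    · exact one_lt_two
    · linarith

theorem natCast_sub_one_mul_logb (m : ℕ) :
    ((m - 1 : ℕ) : ℝ) * Real.logb 2 m = ((m : ℝ) - 1) * Real.logb 2 m := by
  rcases Nat.eq_zero_or_pos m with rfl | hm
  · simp
  · rw [Nat.cast_pred hm]

theorem builderRate_add_two_mul (m : ℕ) :
    builderRate (m + 2) * (m + 3) = 2 * m + 3 + ((m - 1 : ℕ) : ℝ) * Real.logb 2 m := by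
  have hden : ((m : ℝ) + 2 + 1) ≠ 0 := by positivity
  rw [natCast_sub_one_mul_logb, builderRate]
  push_cast
  rw [add_sub_cancel_right]
  field_simp
  ring

theorem pow_pred_pos (m : ℕ) : 0 < m ^ (m - 1) :=
  m.factorial_pos.trans_le (factorial_le_pow_pred m)

theorem logb_succ_le_builderRate (m : ℕ) : Real.logb 2 (m + 1) ≤ builderRate (m + 2) := by
  have hpos : (0 : ℝ) < (m : ℝ) ^ (m - 1) := mod_cast pow_pred_pos m
  have hpow : ((m : ℝ) + 1) ^ (m + 3) ≤ 2 ^ (2 * m + 3) * (m : ℝ) ^ (m - 1) :=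
    mod_cast succ_pow_le_two_pow_mul m
  have hlog := Real.logb_le_logb_of_le one_lt_two (by positivity) hpow
  rw [Real.logb_mul (by positivity) hpos.ne', Real.logb_pow, Real.logb_pow, Real.logb_pow,
    Real.logb_self_eq_one one_lt_two, mul_one] at hlog
  push_cast at hlog
  rw [← builderRate_add_two_mul, mul_comm (builderRate _)] at hlog
  exact le_of_mul_le_mul_left hlog (by positivity)

theorem sum_log_le (m k : ℕ) : ((∑ j ∈ Ico 1 (m + 1), Nat.log 2 (j + k) : ℕ) : ℝ) ≤
    ((m - 1 : ℕ) : ℝ) * Real.logb 2 m + k * Real.logb 2 (m + 1) := by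
  have hpos : (0 : ℝ) < (m : ℝ) ^ (m - 1) := mod_cast pow_pred_pos m
  have hpow : (2 : ℝ) ^ ∑ j ∈ Ico 1 (m + 1), Nat.log 2 (j + k) ≤
      (m : ℝ) ^ (m - 1) * ((m : ℝ) + 1) ^ k := mod_cast two_pow_sum_log_le m k
  have hlog := Real.logb_le_logb_of_le one_lt_two (by positivity) hpow
  rwa [Real.logb_mul hpos.ne' (by positivity), Real.logb_pow, Real.logb_pow, Real.logb_pow,
    Real.logb_self_eq_one one_lt_two, mul_one] at hlog

theorem pieceCost_succ_le (m k : ℕ) :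
    (pieceCost (m + 1) k : ℝ) ≤ builderRate (m + 2) * (m + k + 3) := by
  have hsum := sum_log_le m k
  have hk : (k : ℝ) * Real.logb 2 (m + 1) ≤ k * builderRate (m + 2) := by
    gcongr
    exact logb_succ_le_builderRate m
  calc (pieceCost (m + 1) k : ℝ)
      = 2 * m + 3 + ((∑ j ∈ Ico 1 (m + 1), Nat.log 2 (j + k) : ℕ) : ℝ) := by
        rw [pieceCost]
        push_cast
        ring
    _ ≤ 2 * m + 3 + ((m - 1 : ℕ) : ℝ) * Real.logb 2 m + k * builderRate (m + 2) := by linarith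
    _ = builderRate (m + 2) * (m + k + 3) := by
        rw [← builderRate_add_two_mul]
        ring

theorem pieceCost_le {t m k : ℕ} (hm : m + 1 ≤ t) (hkm : k ≤ m) (ht : 2 ≤ t) :
    (pieceCost m k : ℝ) ≤ builderRate t * (m + k + 2) := by
  cases m with
  | zero =>
    obtain rfl : k = 0 := by omega
    have := one_le_builderRate ht
    simp only [pieceCost, mul_zero, add_zero, zero_le_one, Ico_eq_empty_of_le, sum_empty,
      Nat.cast_one, Nat.cast_zero, zero_add]
    linarith
  | succ m =>
    calc (pieceCost (m + 1) k : ℝ) ≤ builderRate (m + 2) * (m + k + 3) := pieceCost_succ_le m k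
      _ ≤ builderRate t * (m + k + 3) := by
        gcongr
        exact builderRate_le_builderRate (by omega) hm
      _ = builderRate t * ((m + 1 : ℕ) + k + 2) := by
        push_cast
        ring

theorem IsConfiguration.sum_cost_le {n t : ℕ} {h : GameHistory n t} {P : Finset (Piece n t)}
    {i : Fin t} (hC : IsConfiguration h P i) (ht : 2 ≤ t) :
    ((∑ p ∈ P, p.cost : ℕ) : ℝ) ≤ builderRate t * n := by
  have hcost : ∀ p ∈ P, (p.cost : ℝ) ≤ builderRate t * #p.verts := fun p hp => by
    have hp := hC.built p hp
    have hmerges : p.merges + 1 ≤ t :=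
      (Nat.succ_le_of_lt hp.lt_card_colors).trans (card_finset_fin_le _)
    rw [hp.card_verts]
    exact_mod_cast pieceCost_le hmerges hp.double_le ht
  have hrate : 0 ≤ builderRate t := zero_le_one.trans (one_le_builderRate ht)
  calc ((∑ p ∈ P, p.cost : ℕ) : ℝ) = ∑ p ∈ P, (p.cost : ℝ) := Nat.cast_sum _ _
    _ ≤ ∑ p ∈ P, builderRate t * #p.verts := sum_le_sum hcost
    _ = builderRate t * (∑ p ∈ P, #p.verts : ℕ) := by rw [← mul_sum, Nat.cast_sum]
    _ ≤ builderRate t * n := by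
      gcongr
      exact hC.sum_card_verts_le

/-- Theorem (Briggs–Cox): if `t ≥ 2`, `rᵢ ≥ 1` and `n ≥ R(r₁K₂,…,r_tK₂)`, then
`R̃(r₁K₂,…,r_tK₂; n) ≤ ((2t − 1 + (t − 3)·log₂(t − 2)) / (t + 1)) · n`,
with the convention `log₂ 0 = 0` (which holds for `Real.logb`). -/
theorem restrictedOnlineRamsey_upper_bound (t : ℕ) (ht : 2 ≤ t) (r : Fin t → ℕ)
    (hr : ∀ i, 1 ≤ r i) (n : ℕ) (hn : matchingRamsey t r ≤ n) :
    (restrictedOnlineRamsey n t r : ℝ) ≤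
      (2 * (t : ℝ) - 1 + ((t : ℝ) - 3) * Real.logb 2 ((t : ℝ) - 2)) / ((t : ℝ) + 1) * n := by
  have hbound := le_of_matchingRamsey_le hr hn
  let i : Fin t := ⟨0, by omega⟩
  have : Nonempty (Fin t) := ⟨i⟩
  have : Nonempty (Fin n) := ⟨⟨0, by have := hbound i; omega⟩⟩
  have hstart : IsConfiguration ([] : GameHistory n t) ∅ i := ⟨by simp, by simp, by simp⟩
  have hforces : BuilderForces
      (fun h => h.length ≤ ⌊builderRate t * n⌋₊ ∧ HistoryHasMatching n t r h) [] :=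
    (hstart.forces_cover_all (Nat.zero_le _)).bind fun h ⟨P, j, hC, hlen, hcover⟩ =>
      .done ⟨Nat.le_floor ((Nat.cast_le.2 hlen).trans (hC.sum_cost_le ht)),
        hC.historyHasMatching hcover (hbound j)⟩
  have hrate : 0 ≤ builderRate t := zero_le_one.trans (one_le_builderRate ht)
  calc (restrictedOnlineRamsey n t r : ℝ) ≤ ⌊builderRate t * n⌋₊ :=
        Nat.cast_le.2 hforces.restrictedOnlineRamsey_le
    _ ≤ builderRate t * n := Nat.floor_le (by positivity)
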